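/- Let (X, L) be a random vector with values in ℝ × [0,∞) whose law has density h(x,l) = (1/√(2π))·(|x|+l)·exp(−(|x|+l)²/2) with respect to Lebesgue measure on ℝ × [0,∞). Then for every nonnegative measurable function f : ℝ → [0,∞], almost surely E[f(X/2) | σ(L)] = ∫_ℝ f(y)·(2|y| + L)·exp(−(2y² + 2|y|L)) dy. In particular, the conditional density of X/2 at the point y given L = l is (2|y|+l)·exp(−(2y² + 2|y|l)). -/

import Mathlib

open MeasureTheory ProbabilityTheory Real
open scoped ENNReal

/-- The joint density of `(B₁, L₁)`. -/
noncomputable def jointDensity (x l : ℝ) : ℝ :=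
  (1 / Real.sqrt (2 * π)) * (|x| + l) * Real.exp (-(|x| + l) ^ 2 / 2)

theorem aux_lintegral_density (l : ℝ) (hl : 0 ≤ l) :
    ∫⁻ x : ℝ, ENNReal.ofReal (jointDensity x l)
      = ENNReal.ofReal (2 / Real.sqrt (2 * π) * Real.exp (-l ^ 2 / 2)) := by
  have hc : 0 < 1 / Real.sqrt (2 * π) := by positivity
  have h1 : ∫ x in Set.Ioi (0 : ℝ),
      (1 / Real.sqrt (2 * π)) * (x + l) * Real.exp (-(x + l) ^ 2 / 2)
      = 0 - (-(1 / Real.sqrt (2 * π)) * Real.exp (-(0 + l) ^ 2 / 2)) := by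
    apply integral_Ioi_of_hasDerivAt_of_nonneg'
      (g := fun x => -(1 / Real.sqrt (2 * π)) * Real.exp (-(x + l) ^ 2 / 2))
    · intro x _
      have h0 : HasDerivAt (fun x : ℝ => -(x + l) ^ 2 / 2) (-(x + l)) x := by
        have := (((((hasDerivAt_id x).add_const l).pow 2).neg).div_const 2)
        refine HasDerivAt.congr_deriv this ?_
        simp
        ring
      have := (h0.exp).const_mul (-(1 / Real.sqrt (2 * π)))
      refine HasDerivAt.congr_deriv this ?_
      ring
    · intro x hx
      have hx' : 0 < x := hx
      positivity
    · have h0 : Filter.Tendsto (fun x : ℝ => -(x + l) ^ 2 / 2) Filter.atTop Filter.atBot := by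
        have h2 : Filter.Tendsto (fun x : ℝ => (x + l) ^ 2 / 2) Filter.atTop Filter.atTop := by
          apply Filter.Tendsto.atTop_div_const (by norm_num)
          exact (Filter.tendsto_pow_atTop (by norm_num)).comp
            (Filter.tendsto_atTop_add_const_right _ l Filter.tendsto_id)
        have h3 := Filter.tendsto_neg_atTop_atBot.comp h2
        refine h3.congr (fun x => ?_)
        simp only [Function.comp]
        ring
      have := (Real.tendsto_exp_atBot.comp h0).const_mul (-(1 / Real.sqrt (2 * π)))
      simpa using this
  have h2 : ∫ x : ℝ, jointDensity x l = 2 / Real.sqrt (2 * π) * Real.exp (-l ^ 2 / 2) := by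
    have := integral_comp_abs
      (f := fun x => (1 / Real.sqrt (2 * π)) * (x + l) * Real.exp (-(x + l) ^ 2 / 2))
    rw [h1] at this
    unfold jointDensity
    rw [this, zero_add]
    ring
  have hint : Integrable (fun x : ℝ => jointDensity x l) := by
    apply Integrable.of_integral_ne_zero
    rw [h2]
    positivity
  rw [← h2, ofReal_integral_eq_lintegral_ofReal hint]
  refine Filter.Eventually.of_forall (fun x => ?_)
  simp only [Pi.zero_apply, jointDensity]
  positivity

theorem aux_slice (f : ℝ → ℝ≥0∞) (hf : Measurable f) (l : ℝ) (hl : 0 ≤ l) :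
    ∫⁻ x : ℝ, ENNReal.ofReal (jointDensity x l) * f (x / 2)
      = (∫⁻ x : ℝ, ENNReal.ofReal (jointDensity x l)) *
        ∫⁻ y : ℝ, f y *
          ENNReal.ofReal ((2 * |y| + l) * Real.exp (-(2 * y ^ 2 + 2 * |y| * l))) := by
  have hm : Measurable (fun x : ℝ => ENNReal.ofReal (jointDensity x l)) := by
    unfold jointDensity; fun_prop
  rw [aux_lintegral_density l hl, ← lintegral_const_mul' _ _ ENNReal.ofReal_ne_top]
  conv_lhs => rw [← Real.smul_map_volume_mul_left (a := 2) (by norm_num)]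
  rw [lintegral_smul_measure, lintegral_map (by fun_prop) (by fun_prop), smul_eq_mul,
    ← lintegral_const_mul' _ _ ENNReal.ofReal_ne_top]
  refine lintegral_congr (fun y => ?_)
  have e1 : (2 * y) / 2 = y := by ring
  rw [e1, ← mul_assoc, ← ENNReal.ofReal_mul (by positivity), mul_comm (f y), ← mul_assoc,
    ← ENNReal.ofReal_mul (by positivity)]
  congr 2
  have e2 : Real.exp (-(2 * |y| + l) ^ 2 / 2)
      = Real.exp (-l ^ 2 / 2) * Real.exp (-(2 * y ^ 2 + 2 * |y| * l)) := by
    rw [← Real.exp_add]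
    congr 1
    rw [← sq_abs y]
    ring
  have e3 : |2 * y| = 2 * |y| := by rw [abs_mul]; norm_num
  have e4 : |(2 : ℝ)| = 2 := by norm_num
  rw [jointDensity, e3, e4, e2]
  ring

/-- If `(X, L)` has density `h(x,l)` (supported on `ℝ × [0,∞)`) with respect to Lebesgue
measure, then for every nonnegative measurable `f : ℝ → [0,∞]`, almost surely
`E[f(X/2) | σ(L)] = ∫ f(y) (2|y| + L) exp(-(2y² + 2|y|L)) dy`; that is, the (σ(L)-measurable)
function `ω ↦ ∫ f(y) (2|y| + L ω) exp(-(2y² + 2|y| L ω)) dy` is a version of the conditional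
expectation of `f(X/2)` given `σ(L)`: it has the same integral on every `σ(L)`-measurable set.
In particular the conditional density of `X/2` at `y` given `L = l` is
`(2|y|+l)·exp(-(2y² + 2|y|l))`. -/
theorem condExp_sampled_bridge_of_jointDensity {Ω : Type*} [MeasureSpace Ω]
    [IsProbabilityMeasure (ℙ : Measure Ω)]
    (X L : Ω → ℝ) (hX : Measurable X) (hL : Measurable L)
    (hlaw : Measure.map (fun ω => (X ω, L ω)) ℙ
      = (volume : Measure (ℝ × ℝ)).withDensity
          (fun p => ENNReal.ofReal (if 0 ≤ p.2 then jointDensity p.1 p.2 else 0)))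
    (f : ℝ → ℝ≥0∞) (hf : Measurable f) :
    ∀ s : Set Ω, MeasurableSet[MeasurableSpace.comap L inferInstance] s →
      ∫⁻ ω in s, f (X ω / 2) ∂ℙ
        = ∫⁻ ω in s,
            ∫⁻ y : ℝ, f y *
              ENNReal.ofReal ((2 * |y| + L ω) * Real.exp (-(2 * y ^ 2 + 2 * |y| * L ω))) ∂ℙ := by
  rintro s ⟨t, ht, rfl⟩
  set D : ℝ × ℝ → ℝ≥0∞ :=
    fun p => ENNReal.ofReal (if 0 ≤ p.2 then jointDensity p.1 p.2 else 0) with hD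
  have hDm : Measurable D := by
    apply Measurable.ennreal_ofReal
    refine Measurable.ite (measurableSet_le measurable_const measurable_snd) ?_ measurable_const
    unfold jointDensity
    fun_prop
  set G : ℝ → ℝ≥0∞ := fun l => ∫⁻ y : ℝ, f y *
    ENNReal.ofReal ((2 * |y| + l) * Real.exp (-(2 * y ^ 2 + 2 * |y| * l))) with hG
  have hGm : Measurable G := by
    apply Measurable.lintegral_prod_right'
      (f := fun p : ℝ × ℝ => f p.2 *
        ENNReal.ofReal ((2 * |p.2| + p.1) * Real.exp (-(2 * p.2 ^ 2 + 2 * |p.2| * p.1))))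
    fun_prop
  have key : ∀ g : ℝ × ℝ → ℝ≥0∞, Measurable g →
      ∫⁻ ω in L ⁻¹' t, g (X ω, L ω) ∂ℙ
        = ∫⁻ l, t.indicator (fun l => ∫⁻ x, D (x, l) * g (x, l)) l := by
    intro g hg
    have hgi : Measurable ((Prod.snd ⁻¹' t).indicator g) := hg.indicator (measurable_snd ht)
    have h1 : ∫⁻ ω in L ⁻¹' t, g (X ω, L ω) ∂ℙ
        = ∫⁻ ω, (Prod.snd ⁻¹' t).indicator g (X ω, L ω) ∂ℙ := by
      rw [← lintegral_indicator (hL ht)]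
      rfl
    rw [h1, ← lintegral_map (μ := ℙ) hgi (hX.prodMk hL), hlaw,
      lintegral_withDensity_eq_lintegral_mul _ hDm hgi, Measure.volume_eq_prod,
      lintegral_prod_symm' _ (hDm.mul hgi)]
    refine lintegral_congr (fun l => ?_)
    by_cases hlt : l ∈ t
    · simp [hlt, Set.indicator]
    · simp [hlt, Set.indicator]
  have k1 := key (fun p => f (p.1 / 2)) (by fun_prop)
  have k2 := key (fun p => G p.2) (by fun_prop)
  simp only at k1 k2
  rw [k1, k2]
  refine lintegral_congr (fun l => ?_)
  by_cases hlt : l ∈ t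
  · simp only [hlt, Set.indicator_of_mem]
    have hDl : Measurable (fun x => D (x, l)) := by fun_prop
    rw [lintegral_mul_const _ hDl]
    by_cases hl : 0 ≤ l
    · simp only [hD, hl, if_true]
      exact aux_slice f hf l hl
    · simp [hD, hl]
  · simp [hlt]
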